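/- Let ω ∈ DC(c,τ) with τ > d−1 and let g ∈ H_Δ^0 with sup norm |g|_Δ on the strip of width Δ. Then the unique zero-average solution f of L_ω f = g satisfies, for each 0 < δ < Δ, the bound |f|_{Δ−δ} ≤ C(τ,d) δ^{−(d+τ)} |g|_Δ / c, where C(τ,d) depends only on τ and d. -/

import Mathlib

open MeasureTheory Real Complex

noncomputable section

def strip (d : ℕ) (Δ : ℝ) : Set (Fin d → ℂ) := {z | ∀ i, |(z i).im| ≤ Δ}

def Per (d : ℕ) (f : (Fin d → ℂ) → ℂ) : Prop :=
  ∀ z : Fin d → ℂ, ∀ k : Fin d → ℤ, f (z + fun i => 2 * π * (k i : ℂ)) = f z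

def ZeroAvg (d : ℕ) (f : (Fin d → ℂ) → ℂ) : Prop :=
  (∫ θ in Set.Icc (0 : Fin d → ℝ) (fun _ => 2 * π), f (fun i => (θ i : ℂ))) = 0

def IsSol (d : ℕ) (Δ' : ℝ) (ω : Fin d → ℝ) (g f : (Fin d → ℂ) → ℂ) : Prop :=
  (∀ z ∈ strip d Δ', DifferentiableAt ℂ f z) ∧ Per d f ∧ ZeroAvg d f ∧
  ∀ z ∈ strip d Δ', fderiv ℂ f z (fun i => (ω i : ℂ)) = g z

abbrev TT (d : ℕ) := UnitAddTorus (Fin d)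

def tmu (d : ℕ) : Measure (TT d) := Measure.pi (fun _ => AddCircle.haarAddCircle)

instance (d : ℕ) : (tmu d).IsAddHaarMeasure := by unfold tmu; infer_instance
instance (d : ℕ) : IsProbabilityMeasure (tmu d) := by unfold tmu; infer_instance

def lam {d : ℕ} (t y : Fin d → ℝ) : Fin d → ℂ := fun i => 2 * π * (t i : ℂ) + (y i : ℂ) * I

def qq {d : ℕ} (t : Fin d → ℝ) : TT d := fun i => (t i : UnitAddCircle)

lemma qq_quot (d : ℕ) : IsOpenQuotientMap (qq : (Fin d → ℝ) → TT d) := by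
  have : ∀ i : Fin d, IsOpenQuotientMap (fun t : ℝ => (t : UnitAddCircle)) := fun i =>
    QuotientAddGroup.isOpenQuotientMap_mk
  exact IsOpenQuotientMap.piMap this

def rep {d : ℕ} (x : TT d) : Fin d → ℝ := Function.surjInv (qq_quot d).surjective x

lemma qq_rep {d : ℕ} (x : TT d) : qq (rep x) = x := Function.surjInv_eq _ x

lemma qq_add {d : ℕ} (s t : Fin d → ℝ) : qq (s + t) = qq s + qq t := by
  funext i; simp [qq]

def UU {d : ℕ} (u : (Fin d → ℂ) → ℂ) (y : Fin d → ℝ) (x : TT d) : ℂ := u (lam (rep x) y)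

lemma UU_qq {d : ℕ} {u : (Fin d → ℂ) → ℂ} (hu : Per d u) (y t : Fin d → ℝ) :
    UU u y (qq t) = u (lam t y) := by
  have h := qq_rep (qq t)
  have h2 : ∀ i, ∃ n : ℤ, n • (1 : ℝ) = rep (qq t) i - t i := by
    intro i
    rw [← AddCircle.coe_eq_zero_iff]
    have := congrFun h i
    simp only [qq] at this
    rw [AddCircle.coe_sub, sub_eq_zero]
    exact this
  choose n hn using h2
  unfold UU
  rw [← hu (lam t y) n]
  congr 1
  funext i
  have := hn i
  simp only [lam, Pi.add_apply]
  have h3 : rep (qq t) i = t i + n i := by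
    simp at this; linarith
  rw [h3]; push_cast; ring

def box (d : ℕ) (r : ℝ) : Set (Fin d → ℝ) := {y | ∀ i, |y i| ≤ r}

lemma lam_mem {d : ℕ} {r : ℝ} {y : Fin d → ℝ} (hy : y ∈ box d r) (t : Fin d → ℝ) :
    lam t y ∈ strip d r := by
  intro i
  have := hy i
  simpa [lam] using this

lemma lam_cont {d : ℕ} (y : Fin d → ℝ) : Continuous (fun t => lam t y) := by
  unfold lam; fun_prop

lemma UU_cont {d : ℕ} {r : ℝ} {u : (Fin d → ℂ) → ℂ} (hu : Per d u)
    (hd : ∀ z ∈ strip d r, ContinuousAt u z) {y : Fin d → ℝ} (hy : y ∈ box d r) :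
    Continuous (UU u y) := by
  rw [(qq_quot d).isQuotientMap.continuous_iff]
  have : UU u y ∘ qq = fun t => u (lam t y) := by
    funext t; exact UU_qq hu y t
  rw [this]
  rw [continuous_iff_continuousAt]
  intro t
  exact ContinuousAt.comp (hd _ (lam_mem hy t)) (lam_cont y).continuousAt

lemma integrable_prod_aux {d : ℕ} {F : TT d → ℂ} (hF : Continuous F) {v : ℝ → TT d}
    (hv : Continuous v) : Integrable (Function.uncurry fun (t : ℝ) (x : TT d) => F (x + v t))
      ((volume.restrict (Set.uIoc (0:ℝ) 1)).prod (tmu d)) := by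
  obtain ⟨B, hB⟩ : ∃ B, ∀ x, ‖F x‖ ≤ B := by
    obtain ⟨B, hB⟩ := isCompact_univ.exists_bound_of_continuousOn (f := F) hF.continuousOn
    exact ⟨B, fun x => hB x trivial⟩
  have hc : Continuous (Function.uncurry fun (t : ℝ) (x : TT d) => F (x + v t)) := by
    unfold Function.uncurry; fun_prop
  have : IsFiniteMeasure (volume.restrict (Set.uIoc (0:ℝ) 1)) := by
    constructor; simp
  refine Integrable.of_bound hc.aestronglyMeasurable B ?_
  exact Filter.Eventually.of_forall fun p => hB _

lemma avg {d : ℕ} {F : TT d → ℂ} (hF : Continuous F) {v : ℝ → TT d}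
    (hv : Continuous v) :
    ∫ x, F x ∂(tmu d) = ∫ x, (∫ t in (0:ℝ)..1, F (x + v t)) ∂(tmu d) := by
  rw [← intervalIntegral_integral_swap (integrable_prod_aux hF hv)]
  simp [integral_add_right_eq_self]

/-- shift of one coordinate -/
lemma shift_one {d : ℕ} {r : ℝ} {u : (Fin d → ℂ) → ℂ} (hu : Per d u)
    (hd : ∀ z ∈ strip d r, DifferentiableAt ℂ u z) {y : Fin d → ℝ} (hy : y ∈ box d r)
    (j : Fin d) (b : ℝ) (hb : |b| ≤ r) :
    ∫ x, UU u y x ∂(tmu d) = ∫ x, UU u (Function.update y j b) x ∂(tmu d) := by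
  have hy' : Function.update y j b ∈ box d r := by
    intro i
    by_cases h : i = j
    · subst h; simpa using hb
    · simpa [h] using hy i
  have hc := UU_cont hu (fun z hz => (hd z hz).continuousAt) hy
  have hc' := UU_cont hu (fun z hz => (hd z hz).continuousAt) hy'
  have hv : Continuous (fun t : ℝ => qq (Pi.single j t : Fin d → ℝ)) :=
    (qq_quot d).continuous.comp (continuous_pi fun i => by
      by_cases h : i = j
      · subst h; simp only [Pi.single_eq_same]; exact continuous_id
      · simpa [h] using continuous_const)
  rw [avg hc hv, avg hc' hv]
  congr 1
  funext x
  obtain ⟨s, rfl⟩ := (qq_quot d).surjective x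
  simp only [← qq_add, UU_qq hu]
  -- one complex variable
  set L : ℂ → (Fin d → ℂ) := fun ζ => Function.update (lam s y) j
    (2 * π * (s j : ℂ) + 2 * π * ζ) with hL
  have hLd : Differentiable ℂ L := by
    rw [differentiable_pi]
    intro i
    by_cases h : i = j
    · subst h; simp only [hL, Function.update_self]; fun_prop
    · simp only [hL, Function.update_of_ne h]; fun_prop
  have hpi : (0:ℝ) < 2 * π := by positivity
  have hLmem : ∀ ζ : ℂ, ζ.im ∈ Set.uIcc (y j / (2 * π)) (b / (2 * π)) → L ζ ∈ strip d r := by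
    intro ζ hζ i
    by_cases h : i = j
    · subst h
      simp only [hL, Function.update_self]
      have h1 : (2 * (π:ℂ) * (s i : ℂ) + 2 * π * ζ).im = 2 * π * ζ.im := by
        simp
      rw [h1]
      have h2 := abs_le.1 (hy i)
      have h3 := abs_le.1 hb
      rw [Set.mem_uIcc, div_le_iff₀ hpi, div_le_iff₀ hpi, le_div_iff₀ hpi, le_div_iff₀ hpi] at hζ
      rw [abs_le]
      constructor <;> rcases hζ with h | h <;> nlinarith
    · simp only [hL, Function.update_of_ne h]
      exact lam_mem hy s i
  have key := Complex.integral_boundary_rect_eq_zero_of_differentiableOn (fun ζ => u (L ζ))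
    (⟨0, y j / (2 * π)⟩) (⟨1, b / (2 * π)⟩) (by
      intro ζ hζ
      have hζ2 : ζ.im ∈ Set.uIcc (y j / (2 * π)) (b / (2 * π)) := hζ.2
      exact ((hd _ (hLmem ζ hζ2)).comp ζ (hLd ζ)).differentiableWithinAt)
  have hper : ∀ ζ, u (L (1 + ζ)) = u (L ζ) := by
    intro ζ
    rw [← hu (L ζ) (Pi.single j 1)]
    congr 1
    funext i
    by_cases h : i = j
    · subst h; simp [hL]; ring
    · simp [hL, h]
  simp only [Complex.ofReal_one, Complex.ofReal_zero, zero_add, hper] at key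
  rw [add_sub_cancel_right, sub_eq_zero] at key
  have hpc : (π : ℂ) ≠ 0 := by exact_mod_cast Real.pi_ne_zero
  have e1 : ∀ t : ℝ, lam (s + Pi.single j t) y = L (↑t + ↑(y j / (2 * π)) * I) := by
    intro t
    funext i
    by_cases h : i = j
    · subst h
      simp [hL, lam]; field_simp; ring
    · simp [hL, lam, h]
  have e2 : ∀ t : ℝ, lam (s + Pi.single j t) (Function.update y j b)
      = L (↑t + ↑(b / (2 * π)) * I) := by
    intro t
    funext i
    by_cases h : i = j
    · subst h
      simp [hL, lam]; field_simp; ring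
    · simp [hL, lam, h]
  simp only [e1, e2]
  exact key

lemma shift_all {d : ℕ} {r : ℝ} {u : (Fin d → ℂ) → ℂ} (hu : Per d u)
    (hd : ∀ z ∈ strip d r, DifferentiableAt ℂ u z) {y y' : Fin d → ℝ} (hy : y ∈ box d r)
    (hy' : y' ∈ box d r) :
    ∫ x, UU u y x ∂(tmu d) = ∫ x, UU u y' x ∂(tmu d) := by
  have key : ∀ s : Finset (Fin d), ∫ x, UU u y x ∂(tmu d) =
      ∫ x, UU u (s.piecewise y' y) x ∂(tmu d) := by
    intro s
    induction s using Finset.induction_on with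
    | empty => simp
    | insert j s hj ih =>
      rw [ih, Finset.piecewise_insert]
      apply shift_one hu hd _ j _ (hy' j)
      intro i
      by_cases h : i ∈ s
      · simpa [h] using hy' i
      · simpa [h] using hy i
  simpa using key Finset.univ

/-- the integral of a derivative along a constant vector field vanishes -/
lemma deriv_avg {d : ℕ} {r : ℝ} {u w : (Fin d → ℂ) → ℂ} (hu : Per d u) (hw : Per d w)
    (hd : ∀ z ∈ strip d r, DifferentiableAt ℂ u z) (hwc : ∀ z ∈ strip d r, ContinuousAt w z)
    {ω : Fin d → ℝ} (h : ∀ z ∈ strip d r, fderiv ℂ u z (fun i => (ω i : ℂ)) = w z)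
    {y : Fin d → ℝ} (hy : y ∈ box d r) :
    ∫ x, UU w y x ∂(tmu d) = 0 := by
  have hcu := UU_cont hu (fun z hz => (hd z hz).continuousAt) hy
  have hcw := UU_cont hw hwc hy
  have hv : Continuous (fun t : ℝ => qq ((t / (2 * π)) • ω : Fin d → ℝ)) :=
    (qq_quot d).continuous.comp (by fun_prop)
  rw [avg hcw hv]
  have key : ∀ x : TT d, (∫ t in (0:ℝ)..1, UU w y (x + qq ((t / (2 * π)) • ω : Fin d → ℝ))) =
      UU u y (x + qq ((1 / (2 * π)) • ω : Fin d → ℝ)) - UU u y x := by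
    intro x
    obtain ⟨s, rfl⟩ := (qq_quot d).surjective x
    simp only [← qq_add, UU_qq hu, UU_qq hw]
    have hpc : (π : ℂ) ≠ 0 := by exact_mod_cast Real.pi_ne_zero
    have e : ∀ t : ℝ, lam (s + (t / (2 * π)) • ω) y
        = lam s y + (t : ℂ) • (fun i => (ω i : ℂ)) := by
      intro t
      funext i
      simp [lam]; field_simp; ring
    have hmem : ∀ t : ℝ, lam s y + (t : ℂ) • (fun i => (ω i : ℂ)) ∈ strip d r := by
      intro t; rw [← e]; exact lam_mem hy _
    have hder : ∀ t : ℝ, HasDerivAt (fun t : ℝ => u (lam s y + (t : ℂ) • (fun i => (ω i : ℂ))))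
        (w (lam s y + (t : ℂ) • (fun i => (ω i : ℂ)))) t := by
      intro t
      rw [← h _ (hmem t)]
      have h1 : HasDerivAt (fun ζ : ℂ => lam s y + ζ • (fun i => (ω i : ℂ)))
          (fun i => (ω i : ℂ)) (t : ℂ) := by
        simpa using ((hasDerivAt_id (t : ℂ)).smul_const (fun i => (ω i : ℂ))).const_add (lam s y)
      exact ((hd _ (hmem t)).hasFDerivAt.comp_hasDerivAt (t : ℂ) h1).comp_ofReal
    have h0 := intervalIntegral.integral_eq_sub_of_hasDerivAt (a := 0) (b := 1)
      (fun t _ => hder t) (by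
        apply Continuous.intervalIntegrable
        rw [continuous_iff_continuousAt]
        intro t
        have h1 : Continuous fun t : ℝ => lam s y + (t : ℂ) • (fun i => (ω i : ℂ)) := by
          fun_prop
        exact ContinuousAt.comp (hwc _ (hmem t)) h1.continuousAt)
    simp only [e]
    rw [h0]
    simp
  simp only [key]
  rw [integral_sub, integral_add_right_eq_self, sub_self]
  · exact (hcu.comp (continuous_add_const _)).integrable_of_hasCompactSupport
      (HasCompactSupport.of_compactSpace _)
  · exact hcu.integrable_of_hasCompactSupport (HasCompactSupport.of_compactSpace _)

/-- twisted exponential -/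
def EE {d : ℕ} (k : Fin d → ℤ) (z : Fin d → ℂ) : ℂ := Complex.exp (-I * ∑ i, (k i : ℂ) * z i)

lemma EE_per {d : ℕ} (k : Fin d → ℤ) : Per d (EE k) := by
  intro z n
  unfold EE
  rw [Complex.exp_eq_exp_iff_exists_int]
  refine ⟨-∑ i, k i * n i, ?_⟩
  push_cast
  simp only [Pi.add_apply, mul_add, Finset.sum_add_distrib]
  rw [neg_mul, neg_mul, neg_mul, Finset.sum_mul, Finset.mul_sum (s := Finset.univ)
    (f := fun i => (k i : ℂ) * (2 * π * (n i : ℂ)))]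
  congr 1
  rw [neg_inj]
  apply Finset.sum_congr rfl
  intro i _
  ring

lemma EE_diff {d : ℕ} (k : Fin d → ℤ) : Differentiable ℂ (EE k) := by
  unfold EE; fun_prop

lemma EE_fderiv {d : ℕ} (k : Fin d → ℤ) (z v : Fin d → ℂ) :
    fderiv ℂ (EE k) z v = -I * (∑ i, (k i : ℂ) * v i) * EE k z := by
  have h1 : HasDerivAt (fun ζ : ℂ => z + ζ • v) v 0 := by
    simpa using ((hasDerivAt_id (0 : ℂ)).smul_const v).const_add z
  have h2 : HasFDerivAt (EE k) (fderiv ℂ (EE k) z) (z + (0:ℂ) • v) := by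
    simpa using (EE_diff k z).hasFDerivAt
  have h3 := h2.comp_hasDerivAt (0:ℂ) h1
  have h4 : HasDerivAt (EE k ∘ (fun ζ : ℂ => z + ζ • v))
      (-I * (∑ i, (k i : ℂ) * v i) * EE k z) 0 := by
    have e : (EE k ∘ (fun ζ : ℂ => z + ζ • v)) = fun ζ : ℂ =>
        Complex.exp (-I * (∑ i, (k i : ℂ) * z i) + ζ * (-I * (∑ i, (k i : ℂ) * v i))) := by
      funext ζ
      simp only [Function.comp, EE]
      congr 1
      simp only [Pi.add_apply, Pi.smul_apply, smul_eq_mul, mul_add, Finset.sum_add_distrib]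
      rw [Finset.mul_sum, Finset.mul_sum, Finset.mul_sum, Finset.mul_sum]
      congr 1
      apply Finset.sum_congr rfl
      intro i _
      ring
    rw [e]
    have := (((hasDerivAt_id (0 : ℂ)).mul_const (-I * (∑ i, (k i : ℂ) * v i))).const_add
      (-I * (∑ i, (k i : ℂ) * z i))).cexp
    simp only [id, zero_mul, add_zero, one_mul] at this
    rw [mul_comm _ (EE k z)]
    exact this
  exact h3.unique h4

lemma UU_EE {d : ℕ} (k : Fin d → ℤ) (y : Fin d → ℝ) (x : TT d) :
    UU (EE k) y x = UnitAddTorus.mFourier (-k) x * (Real.exp (∑ i, (k i : ℝ) * y i) : ℝ) := by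
  obtain ⟨t, rfl⟩ := (qq_quot d).surjective x
  rw [UU_qq (EE_per k)]
  simp only [UnitAddTorus.mFourier, ContinuousMap.coe_mk, qq, fourier_coe_apply]
  rw [← Complex.exp_sum, Complex.ofReal_exp, ← Complex.exp_add]
  unfold EE lam
  congr 1
  push_cast
  rw [← Finset.sum_add_distrib, Finset.mul_sum]
  apply Finset.sum_congr rfl
  intro i _
  simp only [Pi.neg_apply, Int.cast_neg]
  linear_combination (-(k i : ℂ) * y i) * Complex.I_sq

open scoped Pointwise in
lemma zero_mode {d : ℕ} {f : (Fin d → ℂ) → ℂ} (hf : Per d f) (h0 : ZeroAvg d f) :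
    ∫ x, UU f 0 x ∂(tmu d) = 0 := by
  have h1 : ∫ x, UU f 0 x ∂(tmu d) = ∫ (x : Fin d → ℝ) in
      {x : Fin d → ℝ | ∀ i, x i ∈ Set.Ioc ((0 : Fin d → ℝ) i) ((0 : Fin d → ℝ) i + 1)},
      UU f 0 (fun i => x i) := UnitAddTorus.integral_preimage (UU f 0) 0
  rw [h1]
  have h2 : {x : Fin d → ℝ | ∀ i, x i ∈ Set.Ioc ((0 : Fin d → ℝ) i) ((0 : Fin d → ℝ) i + 1)} =
      Set.univ.pi (fun i => Set.Ioc ((0 : Fin d → ℝ) i) ((1 : Fin d → ℝ) i)) := by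
    ext x; simp [Set.mem_pi]
  have h3 : ∀ x : Fin d → ℝ, UU f 0 (fun i => (x i : UnitAddCircle)) =
      (fun θ : Fin d → ℝ => f (fun i => (θ i : ℂ))) ((2 * π) • x) := by
    intro x
    have := UU_qq hf 0 x
    unfold qq at this
    rw [this]
    congr 1
    funext i
    simp [lam]
  simp only [h3]
  have h5 : (Set.univ.pi fun i => Set.Ioc ((0 : Fin d → ℝ) i) ((1 : Fin d → ℝ) i)) =ᵐ[volume]
      Set.Icc (0 : Fin d → ℝ) 1 := Measure.univ_pi_Ioc_ae_eq_Icc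
  rw [h2, setIntegral_congr_set h5]
  have h6 := Measure.setIntegral_comp_smul_of_pos (volume : Measure (Fin d → ℝ))
    (fun θ : Fin d → ℝ => f (fun i => (θ i : ℂ))) (R := 2 * π) (Set.Icc 0 1) (by positivity)
  refine h6.trans ?_
  have h4 : (2 * π) • Set.Icc (0 : Fin d → ℝ) 1 = Set.Icc (0 : Fin d → ℝ) (fun _ => 2 * π) := by
    have hp : (0:ℝ) < 2 * π := by positivity
    ext x
    rw [Set.mem_smul_set_iff_inv_smul_mem₀ hp.ne']
    simp only [Set.mem_Icc, Pi.le_def, Pi.smul_apply, smul_eq_mul, Pi.zero_apply, Pi.one_apply]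
    apply and_congr <;> apply forall_congr' <;> intro i
    · rw [inv_mul_eq_div, le_div_iff₀ hp, zero_mul]
    · rw [inv_mul_eq_div, div_le_iff₀ hp, one_mul]
  rw [h4]
  unfold ZeroAvg at h0
  rw [h0, smul_zero]

lemma sum_bound {d : ℕ} {a : ℝ} (ha : 0 < a) (S : Finset (Fin d → ℤ)) :
    ∑ k ∈ S, Real.exp (-(a * ∑ i, |(k i : ℝ)|)) ≤ (1 + 2 / a) ^ d := by
  classical
  obtain ⟨A, hA⟩ : ∃ A : Finset ℤ, S ⊆ Fintype.piFinset fun _ : Fin d => A := by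
    refine ⟨S.biUnion fun k => Finset.univ.image k, ?_⟩
    intro k hk
    rw [Fintype.mem_piFinset]
    intro i
    simp only [Finset.mem_biUnion, Finset.mem_image]
    exact ⟨k, hk, i, Finset.mem_univ _, rfl⟩
  have hpos : ∀ n : ℤ, 0 ≤ Real.exp (-(a * |(n : ℝ)|)) := fun n => (Real.exp_pos _).le
  have e1 : Real.exp (-a) < 1 := by simpa using ha
  have hgeo : HasSum (fun n : ℕ => Real.exp (-a) ^ n) (1 - Real.exp (-a))⁻¹ :=
    hasSum_geometric_of_lt_one (Real.exp_pos _).le e1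
  have hgeo' : ∀ n : ℕ, Real.exp (-a) ^ n = Real.exp (-(a * |((n : ℤ) : ℝ)|)) := by
    intro n
    rw [← Real.exp_nat_mul]
    congr 1
    simp; ring
  have hs1 : HasSum (fun n : ℕ => Real.exp (-(a * |((n : ℤ) : ℝ)|))) (1 - Real.exp (-a))⁻¹ := by
    simpa only [hgeo'] using hgeo
  have hs2 : HasSum (fun n : ℕ => Real.exp (-(a * |((-(n : ℤ) : ℤ) : ℝ)|)))
      (1 - Real.exp (-a))⁻¹ := by
    simpa using hs1
  have hs := HasSum.of_nat_of_neg (f := fun n : ℤ => Real.exp (-(a * |(n : ℝ)|))) hs1 hs2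
  have h1 : ∑ n ∈ A, Real.exp (-(a * |(n : ℝ)|)) ≤ 1 + 2 / a := by
    refine (sum_le_hasSum A (fun n _ => hpos n) hs).trans ?_
    simp only [Int.cast_zero, abs_zero, mul_zero, neg_zero, Real.exp_zero]
    have h2 : Real.exp (-a) * (1 + a) ≤ 1 := by
      have h3 := Real.add_one_le_exp a
      have h4 : Real.exp (-a) * Real.exp a = 1 := by rw [← Real.exp_add]; simp
      nlinarith [Real.exp_pos (-a)]
    have h5 : (1 - Real.exp (-a))⁻¹ ≤ 1 + 1 / a := by
      rw [inv_le_iff_one_le_mul₀ (by linarith)]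
      have : 1 + 1 / a = (1 + a) / a := by field_simp; ring
      rw [this, div_mul_eq_mul_div, le_div_iff₀ ha]
      nlinarith
    have : 2 / a = 2 * (1 / a) := by ring
    linarith
  calc ∑ k ∈ S, Real.exp (-(a * ∑ i, |(k i : ℝ)|))
      ≤ ∑ k ∈ Fintype.piFinset fun _ : Fin d => A, Real.exp (-(a * ∑ i, |(k i : ℝ)|)) :=
        Finset.sum_le_sum_of_subset_of_nonneg hA fun _ _ _ => (Real.exp_pos _).le
    _ = ∑ k ∈ Fintype.piFinset fun _ : Fin d => A, ∏ i, Real.exp (-(a * |(k i : ℝ)|)) := by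
        apply Finset.sum_congr rfl
        intro k _
        rw [← Real.exp_sum, Finset.mul_sum, Finset.sum_neg_distrib]
    _ = ∏ _i : Fin d, ∑ n ∈ A, Real.exp (-(a * |(n : ℝ)|)) :=
        Finset.sum_prod_piFinset A (fun _ n => Real.exp (-(a * |(n : ℝ)|)))
    _ ≤ ∏ _i : Fin d, (1 + 2 / a) := by
        apply Finset.prod_le_prod
        · intro i _; exact Finset.sum_nonneg fun n _ => hpos n
        · intro i _; exact h1
    _ = (1 + 2 / a) ^ d := by simp

lemma rpow_bound {τ x : ℝ} (hτ : 0 < τ) (hx : 0 ≤ x) :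
    x ^ τ ≤ (2 * τ) ^ τ * Real.exp (x / 2) := by
  have h1 : x ≤ (2 * τ) * Real.exp (x / (2 * τ)) := by
    have h2 := Real.add_one_le_exp (x / (2 * τ))
    have h3 : x = (2 * τ) * (x / (2 * τ)) := by field_simp
    nlinarith
  calc x ^ τ ≤ ((2 * τ) * Real.exp (x / (2 * τ))) ^ τ := Real.rpow_le_rpow hx h1 hτ.le
    _ = (2 * τ) ^ τ * Real.exp (x / 2) := by
      rw [Real.mul_rpow (by positivity) (Real.exp_pos _).le, ← Real.exp_mul]
      congr 2
      field_simp

lemma pow_bound {d : ℕ} (hd : 1 ≤ d) {δ : ℝ} (hδ : 0 < δ) :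
    Real.exp (-(δ / 4)) * (1 + 2 / (δ / 4)) ^ d ≤ (8 * d) ^ d / δ ^ d := by
  have hd' : (1 : ℝ) ≤ d := by exact_mod_cast hd
  have h1 : δ + 8 ≤ 8 * d * Real.exp (δ / (8 * d)) := by
    have h2 := Real.add_one_le_exp (δ / (8 * d))
    have h3 : δ = (8 * d) * (δ / (8 * d)) := by field_simp
    nlinarith
  have h2 : (δ + 8) ^ d ≤ (8 * d) ^ d * Real.exp (δ / 4) := by
    calc (δ + 8) ^ d ≤ (8 * d * Real.exp (δ / (8 * d))) ^ d :=
          pow_le_pow_left₀ (by linarith) h1 d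
      _ = (8 * d) ^ d * Real.exp (δ / 8) := by
          rw [mul_pow, ← Real.exp_nat_mul]
          congr 2
          field_simp
      _ ≤ _ := by gcongr; linarith
  have h3 : 1 + 2 / (δ / 4) = (δ + 8) / δ := by field_simp; ring
  rw [h3, div_pow, mul_div_assoc']
  gcongr
  have h4 : Real.exp (-(δ / 4)) * Real.exp (δ / 4) = 1 := by rw [← Real.exp_add]; simp
  calc Real.exp (-(δ / 4)) * (δ + 8) ^ d
      ≤ Real.exp (-(δ / 4)) * ((8 * d) ^ d * Real.exp (δ / 4)) := by gcongr
    _ = (8 * d) ^ d := by linear_combination ((8 : ℝ) * d) ^ d * h4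

lemma per_mul {d : ℕ} {u v : (Fin d → ℂ) → ℂ} (hu : Per d u) (hv : Per d v) :
    Per d (fun z => u z * v z) := by
  intro z k
  simp only [hu z k, hv z k]

lemma UU_mul_EE {d : ℕ} (u : (Fin d → ℂ) → ℂ) (k : Fin d → ℤ) (y : Fin d → ℝ) :
    ∫ x, UU (fun z => u z * EE k z) y x ∂(tmu d) =
      (Real.exp (∑ i, (k i : ℝ) * y i) : ℝ) * UnitAddTorus.mFourierCoeff (UU u y) k := by
  have h : UnitAddTorus.mFourierCoeff (UU u y) k =
    ∫ x, UnitAddTorus.mFourier (-k) x • UU u y x ∂(tmu d) := rfl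
  rw [h, ← integral_const_mul]
  congr 1
  funext x
  have := UU_EE k y x
  have h2 : UU (fun z => u z * EE k z) y x = UU u y x * UU (EE k) y x := rfl
  rw [h2, this, smul_eq_mul]
  ring

lemma mF_norm {d : ℕ} (k : Fin d → ℤ) (x : TT d) : ‖UnitAddTorus.mFourier k x‖ ≤ 1 := by
  exact (ContinuousMap.norm_coe_le_norm _ x).trans UnitAddTorus.mFourier_norm.le

lemma coeff_bound {d : ℕ} {Δ δ M : ℝ} {ω : Fin d → ℝ} {g f : (Fin d → ℂ) → ℂ}
    (hδ : 0 < δ) (hg : ∀ z ∈ strip d Δ, DifferentiableAt ℂ g z) (hgp : Per d g)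
    (hM : ∀ z ∈ strip d Δ, ‖g z‖ ≤ M) (hf : IsSol d (Δ - δ) ω g f)
    {y : Fin d → ℝ} (hy : y ∈ box d (Δ - δ)) (k : Fin d → ℤ) :
    |∑ i, ω i * (k i : ℝ)| * ‖UnitAddTorus.mFourierCoeff (UU f y) k‖ ≤
      M * Real.exp (-(δ * ∑ i, |(k i : ℝ)|)) := by
  obtain ⟨hfd, hfp, -, hfe⟩ := hf
  have hsub : ∀ z ∈ strip d (Δ - δ), z ∈ strip d Δ := fun z hz i => (hz i).trans (by linarith)
  have hyΔ : y ∈ box d Δ := fun i => (hy i).trans (by linarith)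
  set Ω : ℂ := ((∑ i, ω i * (k i : ℝ) : ℝ) : ℂ) with hΩ
  have hgd : ∀ z ∈ strip d Δ, DifferentiableAt ℂ (fun z => g z * EE k z) z :=
    fun z hz => (hg z hz).mul (EE_diff k z)
  have hfd' : ∀ z ∈ strip d (Δ - δ), DifferentiableAt ℂ (fun z => f z * EE k z) z :=
    fun z hz => (hfd z hz).mul (EE_diff k z)
  have hgE := per_mul hgp (EE_per k)
  have hfE := per_mul hfp (EE_per k)
  have h1 := deriv_avg (u := fun z => f z * EE k z)
    (w := fun z => g z * EE k z - I * Ω * (f z * EE k z)) hfE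
    (by intro z n; have a := hgE z n; have b := hfE z n; simp only at a b ⊢; rw [a, b])
    hfd'
    (fun z hz => (hgd z (hsub z hz)).continuousAt.sub
      ((hfd' z hz).continuousAt.const_mul _)) (ω := ω)
    (by
      intro z hz
      rw [fderiv_fun_mul (hfd z hz) (EE_diff k z)]
      simp only [add_apply, smul_apply, smul_eq_mul,
        hfe z hz, EE_fderiv]
      have : ∑ i, (k i : ℂ) * (ω i : ℂ) = Ω := by
        rw [hΩ]; push_cast
        exact Finset.sum_congr rfl fun i _ => mul_comm _ _
      rw [this]; ring) hy
  have hcg := UU_cont hgE (fun z hz => (hgd z hz).continuousAt) hyΔ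
  have hcf := UU_cont hfE (fun z hz => (hfd' z hz).continuousAt) hy
  have h2 : ∫ x, UU (fun z => g z * EE k z) y x ∂(tmu d) =
      I * Ω * ∫ x, UU (fun z => f z * EE k z) y x ∂(tmu d) := by
    rw [← sub_eq_zero, ← integral_const_mul, ← integral_sub]
    · exact h1
    · exact hcg.integrable_of_hasCompactSupport (HasCompactSupport.of_compactSpace _)
    · exact (hcf.integrable_of_hasCompactSupport (HasCompactSupport.of_compactSpace _)).const_mul _
  set y' : Fin d → ℝ := fun i => y i - δ * (SignType.sign (k i : ℝ) : ℝ) with hy'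
  have hy'm : y' ∈ box d Δ := by
    intro i
    have h3 := abs_le.1 (hy i)
    have h4 : |(SignType.sign (k i : ℝ) : ℝ)| ≤ 1 := by
      rcases lt_trichotomy (k i : ℝ) 0 with h | h | h <;> simp [h]
    have h5 := abs_le.1 h4
    rw [abs_le]
    simp only [hy']
    constructor <;> nlinarith
  have hky : ∑ i, (k i : ℝ) * y' i = ∑ i, (k i : ℝ) * y i - δ * ∑ i, |(k i : ℝ)| := by
    rw [Finset.mul_sum, ← Finset.sum_sub_distrib]
    apply Finset.sum_congr rfl
    intro i _
    simp only [hy']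
    have : (k i : ℝ) * (SignType.sign (k i : ℝ) : ℝ) = |(k i : ℝ)| :=
      self_mul_sign _
    linear_combination -δ * this
  rw [shift_all hgE hgd hyΔ hy'm, UU_mul_EE, UU_mul_EE, hky] at h2
  have h3 : ‖UnitAddTorus.mFourierCoeff (UU g y') k‖ ≤ M := by
    have h : UnitAddTorus.mFourierCoeff (UU g y') k =
      ∫ x, UnitAddTorus.mFourier (-k) x • UU g y' x ∂(tmu d) := rfl
    rw [h]
    have := norm_integral_le_of_norm_le_const (μ := tmu d) (C := M)
      (f := fun x => UnitAddTorus.mFourier (-k) x • UU g y' x) (Filter.Eventually.of_forall (by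
        intro x
        rw [norm_smul]
        have a := mF_norm (-k) x
        have b : ‖UU g y' x‖ ≤ M := hM _ (lam_mem hy'm _)
        nlinarith [norm_nonneg (UU g y' x)]))
    simpa using this
  have h4 := congrArg norm h2
  simp only [norm_mul, Complex.norm_real, Complex.norm_I, one_mul, hΩ, Real.norm_eq_abs,
    Real.abs_exp] at h4
  rw [sub_eq_add_neg, Real.exp_add] at h4
  have hE := Real.exp_pos (∑ i, (k i : ℝ) * y i)
  have hE2 := Real.exp_pos (-(δ * ∑ i, |(k i : ℝ)|))
  have h5 : Real.exp (∑ i, (k i : ℝ) * y i) * (|∑ i, ω i * (k i : ℝ)| *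
      ‖UnitAddTorus.mFourierCoeff (UU f y) k‖) ≤ Real.exp (∑ i, (k i : ℝ) * y i) *
      (M * Real.exp (-(δ * ∑ i, |(k i : ℝ)|))) := by
    calc _ = Real.exp (∑ i, (k i : ℝ) * y i) * (Real.exp (-(δ * ∑ i, |(k i : ℝ)|)) *
          ‖UnitAddTorus.mFourierCoeff (UU g y') k‖) := by linear_combination -h4
      _ ≤ _ := by
        rw [mul_comm M]
        gcongr
  exact le_of_mul_le_mul_left h5 hE

theorem stmt1 (d : ℕ) (hd : 1 ≤ d) (τ : ℝ) (hτ : (d : ℝ) - 1 < τ) :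
    ∃ C : ℝ, 0 < C ∧
      ∀ (c Δ δ M : ℝ) (ω : Fin d → ℝ) (g f : (Fin d → ℂ) → ℂ),
        0 < c → 0 < δ → δ < Δ →
        (∀ k : Fin d → ℤ, k ≠ 0 →
          c / ‖(fun i => (k i : ℝ) : Fin d → ℝ)‖ ^ τ ≤ |∑ i, ω i * (k i : ℝ)|) →
        (∀ z ∈ strip d Δ, DifferentiableAt ℂ g z) → Per d g → ZeroAvg d g →
        (∀ z ∈ strip d Δ, ‖g z‖ ≤ M) →
        IsSol d (Δ - δ) ω g f →
        ∀ z ∈ strip d (Δ - δ), ‖f z‖ ≤ C / δ ^ ((d : ℝ) + τ) * M / c := by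
  have hd' : (1 : ℝ) ≤ d := by exact_mod_cast hd
  have hτ0 : 0 < τ := by linarith
  refine ⟨(2 * τ) ^ τ * (8 * d) ^ d, by positivity, ?_⟩
  intro c Δ δ M ω g f hc hδ hδΔ hω hg hgp hg0 hM hf z hz
  have hM0 : 0 ≤ M := (norm_nonneg _).trans (hM 0 (by intro i; simp; linarith))
  set y : Fin d → ℝ := fun i => (z i).im with hy
  have hyb : y ∈ box d (Δ - δ) := fun i => hz i
  set t : Fin d → ℝ := fun i => (z i).re / (2 * π) with ht
  have hpc : (π : ℂ) ≠ 0 := by exact_mod_cast Real.pi_ne_zero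
  have hzt : lam t y = z := by
    funext i
    simp only [lam, ht, hy]
    rw [← Complex.re_add_im (z i)]
    push_cast
    simp
    field_simp
    exact Complex.re_add_im (z i)
  have hfc := UU_cont hf.2.1 (fun z hz => (hf.1 z hz).continuousAt) hyb
  let Φ : C(TT d, ℂ) := ⟨UU f y, hfc⟩
  set a := UnitAddTorus.mFourierCoeff Φ with ha
  set B : ℝ := M / c * ((2 * τ) ^ τ / δ ^ τ * Real.exp (-(δ / 4))) with hB
  have hB0 : 0 ≤ B := by positivity
  have hbound : ∀ k, ‖a k‖ ≤ B * Real.exp (-(δ / 4 * ∑ i, |(k i : ℝ)|)) := by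
    intro k
    by_cases hk : k = 0
    · have : a k = 0 := by
        have h1 : a k = ∫ x, UnitAddTorus.mFourier (-k) x • UU f y x ∂(tmu d) := rfl
        rw [h1, hk, neg_zero, UnitAddTorus.mFourier_zero]
        simp only [ContinuousMap.one_apply, one_smul]
        rw [shift_all hf.2.1 hf.1 hyb (y' := 0) (by intro i; simp; linarith)]
        exact zero_mode hf.2.1 hf.2.2.1
      rw [this, norm_zero]; positivity
    · have h1 := coeff_bound hδ hg hgp hM hf hyb k
      have h2 := hω k hk
      set nk := ‖(fun i => (k i : ℝ) : Fin d → ℝ)‖ with hnk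
      set N := ∑ i, |(k i : ℝ)| with hN
      obtain ⟨i0, hi0⟩ : ∃ i, k i ≠ 0 := Function.ne_iff.1 hk
      have h3 : 1 ≤ nk := by
        have h4 : ‖(k i0 : ℝ)‖ ≤ nk := norm_le_pi_norm (fun i => (k i : ℝ)) i0
        refine le_trans ?_ h4
        rw [Real.norm_eq_abs]
        exact_mod_cast Int.one_le_abs hi0
      have h4 : nk ≤ N := by
        rw [hnk, pi_norm_le_iff_of_nonneg (by positivity)]
        intro i
        rw [Real.norm_eq_abs]
        exact Finset.single_le_sum (f := fun i => |(k i : ℝ)|) (fun i _ => abs_nonneg _)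
          (Finset.mem_univ i)
      have hnkp : 0 < nk ^ τ := by positivity
      have h5 : c * ‖a k‖ ≤ N ^ τ * (M * Real.exp (-(δ * N))) := by
        have h6 : c / nk ^ τ * ‖a k‖ ≤ M * Real.exp (-(δ * N)) :=
          (mul_le_mul_of_nonneg_right h2 (norm_nonneg _)).trans h1
        calc c * ‖a k‖ = nk ^ τ * (c / nk ^ τ * ‖a k‖) := by field_simp
          _ ≤ nk ^ τ * (M * Real.exp (-(δ * N))) := by gcongr
          _ ≤ N ^ τ * (M * Real.exp (-(δ * N))) := by gcongr
      have hN1 : 1 ≤ N := h3.trans h4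
      have h7 := rpow_bound (x := δ * N) hτ0 (by positivity)
      rw [Real.mul_rpow hδ.le (by linarith)] at h7
      have h8 : N ^ τ ≤ (2 * τ) ^ τ / δ ^ τ * Real.exp (δ * N / 2) := by
        rw [div_mul_eq_mul_div, le_div_iff₀ (by positivity)]
        linarith
      have h9 : c * ‖a k‖ ≤ c * (B * Real.exp (-(δ / 4 * N))) := by
        calc c * ‖a k‖ ≤ N ^ τ * (M * Real.exp (-(δ * N))) := h5
          _ ≤ (2 * τ) ^ τ / δ ^ τ * Real.exp (δ * N / 2) * (M * Real.exp (-(δ * N))) := by gcongr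
          _ = M * ((2 * τ) ^ τ / δ ^ τ) * (Real.exp (-(δ / 4 * N)) * Real.exp (-(δ / 4 * N))) := by
            have : Real.exp (δ * N / 2) * Real.exp (-(δ * N)) =
                Real.exp (-(δ / 4 * N)) * Real.exp (-(δ / 4 * N)) := by
              rw [← Real.exp_add, ← Real.exp_add]; congr 1; ring
            linear_combination M * ((2 * τ) ^ τ / δ ^ τ) * this
          _ ≤ M * ((2 * τ) ^ τ / δ ^ τ) * (Real.exp (-(δ / 4)) * Real.exp (-(δ / 4 * N))) := by
            gcongr
            nlinarith
          _ = c * (B * Real.exp (-(δ / 4 * N))) := by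
            rw [hB]; field_simp
      exact le_of_mul_le_mul_left h9 hc
  have hfin : ∀ S : Finset (Fin d → ℤ), ∑ k ∈ S, ‖a k‖ ≤ B * (1 + 2 / (δ / 4)) ^ d := by
    intro S
    calc ∑ k ∈ S, ‖a k‖ ≤ ∑ k ∈ S, B * Real.exp (-(δ / 4 * ∑ i, |(k i : ℝ)|)) :=
          Finset.sum_le_sum fun k _ => hbound k
      _ = B * ∑ k ∈ S, Real.exp (-(δ / 4 * ∑ i, |(k i : ℝ)|)) := by rw [Finset.mul_sum]
      _ ≤ _ := by
          gcongr
          exact sum_bound (by positivity) S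
  have hsn : Summable fun k => ‖a k‖ := summable_of_sum_le (fun _ => norm_nonneg _) hfin
  have hs : Summable a := hsn.of_norm
  have hsum := UnitAddTorus.hasSum_mFourier_series_apply_of_summable hs (qq t)
  have hval : Φ (qq t) = f z := by
    have : Φ (qq t) = UU f y (qq t) := rfl
    rw [this, UU_qq hf.2.1, hzt]
  rw [hval] at hsum
  have hle : ‖f z‖ ≤ ∑' k, ‖a k‖ := by
    rw [← hsum.tsum_eq]
    refine tsum_of_norm_bounded hsn.hasSum ?_
    intro k
    rw [norm_smul]
    exact mul_le_of_le_one_right (norm_nonneg _) (mF_norm k _)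
  calc ‖f z‖ ≤ ∑' k, ‖a k‖ := hle
    _ ≤ B * (1 + 2 / (δ / 4)) ^ d := hsn.tsum_le_of_sum_le hfin
    _ = M / c * ((2 * τ) ^ τ / δ ^ τ) * (Real.exp (-(δ / 4)) * (1 + 2 / (δ / 4)) ^ d) := by
      rw [hB]; ring
    _ ≤ M / c * ((2 * τ) ^ τ / δ ^ τ) * ((8 * d) ^ d / δ ^ d) := by
      gcongr
      exact pow_bound hd hδ
    _ = _ := by
      rw [Real.rpow_add hδ, Real.rpow_natCast]
      field_simp
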